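/- arXiv:0910.2061 — 2 statements merged into one kernel-verified Lean document; each statement's English description precedes it below -/
import Mathlib

section
/- Let X be a compact metric space, let n be a positive integer, and let a ∈ M_n(C(X)) be positive. Let g : X → ℤ≥0 be upper semicontinuous and suppose that rank(a(x)) ≥ g(x) for every x ∈ X. Then there exists η > 0 such that for every x ∈ X the number of eigenvalues of the matrix a(x), counted with multiplicity, that are strictly greater than η is at least g(x) (equivalently, the spectral projection χ_{(η,∞)}(a(x)) has rank at least g(x)). -/
open scoped ComplexOrder

/-!
Let `N (A, c)` be the number of eigenvalues of a Hermitian matrix `A` exceeding `c`. By the min-max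
principle it is the largest dimension of a subspace on which the Rayleigh quotient of `A` exceeds
`c`. For a fixed subspace this is an open condition on `(A, c)`, since the unit sphere of the
subspace is compact, so `N` is jointly lower semicontinuous. Hence, `g` being integer valued and
upper semicontinuous, `g x ≤ N (a x, t)` holds near `(c, x)` whenever `g x ≤ N (a x, c)`. If this
is so for every `x` in a compact space `X`, the tube lemma provides some `η > c` such that
`g x ≤ N (a x, η)` for all `x`. For positive `A` the rank is `N (A, 0)`.
-/

open Filter Finset Module Topology

section Operator

variable {𝕜 E ι ι' : Type*} [RCLike 𝕜] [NormedAddCommGroup E] [InnerProductSpace 𝕜 E]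
  [Fintype ι] [Fintype ι'] {b : OrthonormalBasis ι 𝕜 E} {T : E →L[𝕜] E} {ev : ι → ℝ} {c : ℝ}
  {V : Submodule 𝕜 E} {v : E}

theorem reApplyInnerSelf_eq_sum_of_apply_eq_smul (hT : ∀ i, T (b i) = (ev i : 𝕜) • b i)
    (v : E) :
    T.reApplyInnerSelf v = ∑ i, ev i * ‖inner 𝕜 (b i) v‖ ^ 2 := by
  have hTv : T v = ∑ i, (inner 𝕜 (b i) v * (ev i : 𝕜)) • b i := by
    conv_lhs => rw [← b.sum_repr' v, map_sum]
    simp only [map_smul, hT, smul_smul]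
  have hterm (i : ι) : inner 𝕜 ((inner 𝕜 (b i) v * (ev i : 𝕜)) • b i) v =
      ((ev i * ‖inner 𝕜 (b i) v‖ ^ 2 : ℝ) : 𝕜) := by
    rw [inner_smul_left, map_mul, RCLike.conj_ofReal, mul_right_comm, RCLike.conj_mul]
    push_cast
    ring
  rw [T.reApplyInnerSelf_apply, hTv, sum_inner, sum_congr rfl fun i _ ↦ hterm i,
    ← RCLike.ofReal_sum, RCLike.ofReal_re]

theorem lt_rayleighQuotient_iff_sum_pos (hT : ∀ i, T (b i) = (ev i : 𝕜) • b i) (hv : v ≠ 0) :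
    c < T.rayleighQuotient v ↔ 0 < ∑ i, (ev i - c) * ‖inner 𝕜 (b i) v‖ ^ 2 := by
  rw [ContinuousLinearMap.rayleighQuotient, lt_div_iff₀ (by positivity),
    reApplyInnerSelf_eq_sum_of_apply_eq_smul hT, ← b.sum_sq_norm_inner_right v, mul_sum,
    ← sub_pos, ← sum_sub_distrib]
  simp only [sub_mul]

theorem finrank_le_card_lt_of_forall_lt_rayleighQuotient
    (hT : ∀ i, T (b i) = (ev i : 𝕜) • b i) (hV : ∀ v ∈ V, v ≠ 0 → c < T.rayleighQuotient v) :
    finrank 𝕜 V ≤ #{i | c < ev i} := by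
  let coords : V →ₗ[𝕜] {i // c < ev i} → 𝕜 :=
    LinearMap.pi fun i ↦ (innerSL 𝕜 (b i)).toLinearMap ∘ₗ V.subtype
  have hinj : Function.Injective coords := by
    rw [← LinearMap.ker_eq_bot, LinearMap.ker_eq_bot']
    intro v hv
    by_contra hv0
    refine ((lt_rayleighQuotient_iff_sum_pos hT (by simpa using hv0)).1
      (hV v v.2 (by simpa using hv0))).not_ge (sum_nonpos fun i _ ↦ ?_)
    rcases lt_or_ge c (ev i) with hi | hi
    · have hvi : inner 𝕜 (b i) (v : E) = 0 := congrFun hv ⟨i, hi⟩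
      simp [hvi]
    · exact mul_nonpos_of_nonpos_of_nonneg (sub_nonpos.2 hi) (by positivity)
  simpa [Fintype.card_subtype] using LinearMap.finrank_le_finrank_of_injective hinj

theorem lt_rayleighQuotient_of_mem_span (hT : ∀ i, T (b i) = (ev i : 𝕜) • b i)
    (hv : v ∈ Submodule.span 𝕜 (Set.range fun i : {i // c < ev i} ↦ b i)) (hv0 : v ≠ 0) :
    c < T.rayleighQuotient v := by
  have hcoord (j : ι) (hj : ¬c < ev j) : inner 𝕜 (b j) v = 0 := by
    have hspan : Submodule.span 𝕜 (Set.range fun i : {i // c < ev i} ↦ b i) ≤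
        (innerSL 𝕜 (b j)).toLinearMap.ker := by
      rw [Submodule.span_le]
      rintro _ ⟨i, rfl⟩
      exact b.inner_eq_zero fun hji ↦ hj (hji ▸ i.2)
    exact hspan hv
  obtain ⟨j, hj⟩ : ∃ j, inner 𝕜 (b j) v ≠ 0 := by
    by_contra! h
    exact hv0 (b.toBasis.ext_elem fun i ↦ by simp [b.repr_apply_apply, h])
  refine (lt_rayleighQuotient_iff_sum_pos hT hv0).2
    (sum_pos' (fun i _ ↦ ?_) ⟨j, mem_univ j, ?_⟩)
  · by_cases hi : c < ev i
    · exact mul_nonneg (sub_nonneg.2 hi.le) (by positivity)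
    · simp [hcoord i hi]
  · have hcj : c < ev j := not_imp_comm.1 (hcoord j) hj
    exact mul_pos (sub_pos.2 hcj) (by positivity)

theorem exists_finrank_eq_card_lt_and_forall_lt_rayleighQuotient
    (hT : ∀ i, T (b i) = (ev i : 𝕜) • b i) (c : ℝ) :
    ∃ V : Submodule 𝕜 E, finrank 𝕜 V = #{i | c < ev i} ∧
      ∀ v ∈ V, v ≠ 0 → c < T.rayleighQuotient v := by
  refine ⟨_, ?_, fun v hv hv0 ↦ lt_rayleighQuotient_of_mem_span hT hv hv0⟩
  have hb : LinearIndependent 𝕜 fun i : {i // c < ev i} ↦ b i :=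
    b.orthonormal.linearIndependent.comp _ Subtype.val_injective
  rw [finrank_span_eq_card hb, Fintype.card_subtype]

theorem eventually_forall_lt_rayleighQuotient [FiniteDimensional 𝕜 V]
    (hV : ∀ v ∈ V, v ≠ 0 → c < T.rayleighQuotient v) :
    ∀ᶠ p : (E →L[𝕜] E) × ℝ in 𝓝 (T, c), ∀ v ∈ V, v ≠ 0 → p.2 < p.1.rayleighQuotient v := by
  have : ProperSpace V := FiniteDimensional.proper_rclike 𝕜 V
  have hsphere : ∀ᶠ p : (E →L[𝕜] E) × ℝ in 𝓝 (T, c),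
      ∀ u ∈ Metric.sphere (0 : V) 1, p.2 < p.1.reApplyInnerSelf u := by
    refine (isCompact_sphere 0 1).eventually_forall_of_forall_eventually fun u hu ↦ ?_
    have hu1 : ‖(u : E)‖ = 1 := by simpa using hu
    have hlt : c < T.reApplyInnerSelf u := by
      simpa [ContinuousLinearMap.rayleighQuotient, hu1] using
        hV u u.2 (norm_ne_zero_iff.1 (by simp [hu1]))
    refine ContinuousAt.eventually_lt (f := fun q : ((E →L[𝕜] E) × ℝ) × V ↦ q.1.2)
      (g := fun q ↦ q.1.1.reApplyInnerSelf q.2) (by fun_prop) ?_ hlt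
    simp only [ContinuousLinearMap.reApplyInnerSelf_apply]
    fun_prop
  filter_upwards [hsphere] with p hp v hv hv0
  have hnorm : ‖((‖v‖⁻¹ : ℝ) : 𝕜) • v‖ = 1 := by simp [norm_smul, hv0]
  have hunit := hp ⟨((‖v‖⁻¹ : ℝ) : 𝕜) • v, V.smul_mem _ hv⟩ (by simpa using hnorm)
  rw [← p.1.rayleigh_smul v (c := ((‖v‖⁻¹ : ℝ) : 𝕜)) (by simpa using hv0)]
  rwa [ContinuousLinearMap.rayleighQuotient, hnorm, one_pow, div_one]

theorem eventually_card_lt_le_of_apply_eq_smul (hT : ∀ i, T (b i) = (ev i : 𝕜) • b i) (c : ℝ) :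
    ∀ᶠ p : (E →L[𝕜] E) × ℝ in 𝓝 (T, c), ∀ (b' : OrthonormalBasis ι' 𝕜 E) (ev' : ι' → ℝ),
      (∀ i, p.1 (b' i) = (ev' i : 𝕜) • b' i) → #{i | c < ev i} ≤ #{i | p.2 < ev' i} := by
  have : FiniteDimensional 𝕜 E := b.toBasis.finiteDimensional_of_finite
  obtain ⟨V, hdim, hV⟩ := exists_finrank_eq_card_lt_and_forall_lt_rayleighQuotient hT c
  filter_upwards [eventually_forall_lt_rayleighQuotient hV] with p hp b' ev' hb'
  exact hdim ▸ finrank_le_card_lt_of_forall_lt_rayleighQuotient hb' hp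

end Operator

section Matrix

variable {𝕜 ι : Type*} [RCLike 𝕜] [Fintype ι] [DecidableEq ι] {A : Matrix ι ι 𝕜}

theorem toEuclideanCLM_apply_eigenvectorBasis (hA : A.IsHermitian) (i : ι) :
    Matrix.toEuclideanCLM (n := ι) (𝕜 := 𝕜) A (hA.eigenvectorBasis i) =
      (hA.eigenvalues i : 𝕜) • hA.eigenvectorBasis i := by
  ext j
  simpa [RCLike.real_smul_eq_coe_mul] using congrFun (hA.mulVec_eigenvectorBasis i) j

theorem continuous_toEuclideanCLM :
    Continuous (Matrix.toEuclideanCLM (n := ι) (𝕜 := 𝕜)) :=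
  (Matrix.toEuclideanCLM (n := ι) (𝕜 := 𝕜)).toAlgEquiv.toLinearMap.continuous_of_finiteDimensional

theorem eventually_card_lt_eigenvalues_le (hA : A.IsHermitian) (c : ℝ) :
    ∀ᶠ p : Matrix ι ι 𝕜 × ℝ in 𝓝 (A, c), ∀ hB : p.1.IsHermitian,
      #{i | c < hA.eigenvalues i} ≤ #{i | p.2 < hB.eigenvalues i} := by
  have hcont : Tendsto (Prod.map (Matrix.toEuclideanCLM (n := ι) (𝕜 := 𝕜)) id) (𝓝 (A, c))
      (𝓝 (Matrix.toEuclideanCLM (n := ι) (𝕜 := 𝕜) A, c)) :=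
    (continuous_toEuclideanCLM.prodMap continuous_id).tendsto (A, c)
  filter_upwards [hcont.eventually (eventually_card_lt_le_of_apply_eq_smul (ι' := ι)
    (toEuclideanCLM_apply_eigenvectorBasis hA) c)] with p hp hB
  exact hp hB.eigenvectorBasis hB.eigenvalues (toEuclideanCLM_apply_eigenvectorBasis hB)

theorem rank_eq_card_eigenvalues_pos (hA : A.PosSemidef) :
    A.rank = #{i | 0 < hA.isHermitian.eigenvalues i} := by
  simp only [hA.isHermitian.rank_eq_card_non_zero_eigs, Fintype.card_subtype,
    (hA.eigenvalues_nonneg _).lt_iff_ne']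

theorem stmt0_general {X : Type*} [TopologicalSpace X] [CompactSpace X] {a : X → Matrix ι ι 𝕜}
    (hcont : Continuous a) (ha : ∀ x, (a x).IsHermitian) {g : X → ℕ}
    (hg : UpperSemicontinuous g) {c : ℝ} (hgc : ∀ x, g x ≤ #{i | c < (ha x).eigenvalues i}) :
    ∃ η, c < η ∧ ∀ x, g x ≤ #{i | η < (ha x).eigenvalues i} := by
  have hopen (x : X) : ∀ᶠ p : ℝ × X in 𝓝 (c, x), g p.2 ≤ #{i | p.1 < (ha p.2).eigenvalues i} := by
    have hgx : ∀ᶠ p : ℝ × X in 𝓝 (c, x), g p.2 < g x + 1 :=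
      (continuous_snd.tendsto (c, x)).eventually (hg x _ (Nat.lt_succ_self _))
    have hax : Tendsto (fun p : ℝ × X ↦ (a p.2, p.1)) (𝓝 (c, x)) (𝓝 (a x, c)) :=
      (by fun_prop : Continuous fun p : ℝ × X ↦ (a p.2, p.1)).tendsto (c, x)
    filter_upwards [hgx, hax.eventually (eventually_card_lt_eigenvalues_le (ha x) c)] with p hp hN
    exact (Nat.lt_succ_iff.1 hp).trans ((hgc x).trans (hN (ha p.2)))
  have htube : ∀ᶠ η in 𝓝 c, ∀ x ∈ Set.univ, g x ≤ #{i | η < (ha x).eigenvalues i} :=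
    isCompact_univ.eventually_forall_of_forall_eventually fun x _ ↦ hopen x
  obtain ⟨η, hη, hcη⟩ := ((htube.filter_mono nhdsWithin_le_nhds).and
    (self_mem_nhdsWithin (s := Set.Ioi c))).exists
  exact ⟨η, hcη, fun x ↦ hη x (Set.mem_univ x)⟩

end Matrix

/-- For a positive element `a` of `M_n(C(X))` over a compact metric space `X`,
and an upper semicontinuous `g : X → ℤ≥0` with `rank(a(x)) ≥ g(x)` everywhere, there is
`η > 0` such that for every `x` the number of eigenvalues of `a(x)` (with multiplicity)
strictly greater than `η` is at least `g(x)`. -/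
theorem stmt0 {X : Type*} [MetricSpace X] [CompactSpace X] (n : ℕ) (hn : 0 < n)
    (a : C(X, Matrix (Fin n) (Fin n) ℂ)) (ha : ∀ x, (a x).PosSemidef)
    (g : X → ℕ) (hg : UpperSemicontinuous g)
    (hrank : ∀ x, g x ≤ (a x).rank) :
    ∃ η : ℝ, 0 < η ∧ ∀ x : X,
      g x ≤ (Finset.univ.filter fun i : Fin n =>
        η < (ha x).isHermitian.eigenvalues i).card := by
  exact stmt0_general a.continuous (fun x ↦ (ha x).isHermitian) hg fun x ↦
    (hrank x).trans_eq (rank_eq_card_eigenvalues_pos (ha x))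
end

section
/- Let X be a compact metric space of finite covering dimension d, let n, k be positive integers, and let a ∈ M_n(C(X)) be positive with rank(a(x)) ≥ k for all x ∈ X. Then there is a homotopy h : [0,1] → M_n(C(X))₊ such that: (i) h(0) = a; (ii) rank(h(t)(x)) = rank(a(x)) for all t ∈ [0,1] and all x ∈ X; (iii) there is a trivial projection p ∈ M_n(C(X)) of constant rank at least k − d which is a direct summand of h(1), i.e., p·h(1) = h(1)·p = p. -/
open scoped ComplexOrder unitInterval

/-- `X` has Lebesgue covering dimension at most `d`: every open cover admits an open
refinement in which every point belongs to at most `d + 1` members. -/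
def HasCovDimLE (X : Type*) [TopologicalSpace X] (d : ℕ) : Prop :=
  ∀ 𝒰 : Set (Set X), (∀ U ∈ 𝒰, IsOpen U) → ⋃₀ 𝒰 = Set.univ →
    ∃ 𝒱 : Set (Set X), (∀ V ∈ 𝒱, IsOpen V) ∧ ⋃₀ 𝒱 = Set.univ ∧
      (∀ V ∈ 𝒱, ∃ U ∈ 𝒰, V ⊆ U) ∧
      ∀ x : X, {V ∈ 𝒱 | x ∈ V}.Finite ∧ {V ∈ 𝒱 | x ∈ V}.ncard ≤ d + 1

/-- `X` has Lebesgue covering dimension exactly `d`: `d` is the least natural number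
such that `HasCovDimLE X d`. -/
def IsCovDim (X : Type*) [TopologicalSpace X] (d : ℕ) : Prop :=
  HasCovDimLE X d ∧ ∀ e : ℕ, HasCovDimLE X e → d ≤ e

/-!
Suppose `V : X → M_{n × m}` is continuous and `a x * V x` is injective for every `x`. Then `a` is
the sum of `aV (Vᴴ a V)⁻¹ (aV)ᴴ` and a positive Schur complement which annihilates `V`. Deforming
the first summand to the projection `V (Vᴴ V)⁻¹ Vᴴ` along segments keeps the ranks constant and
ends at an element which has this projection as a direct summand.

To find such a `V`, choose a continuous Hermitian `s ≤ a` close to `a`, with values in the convex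
hulls of finitely many sets of at most `d + 1` matrices. Then `s⁺` has rank at least `k`, and
`a s⁺ u = 0` forces `s⁺ u = 0`, so for `V = s⁺ N` with `N` constant it suffices that `s⁺ N` is
injective. The values of `s⁺` lie in Lipschitz images of finitely many polytopes of dimension at
most `d` and have kernels of real dimension at most `2 (n - k)`, so a count of Hausdorff dimensions
lets us choose `k - ⌊d / 2⌋` columns for `N` one at a time. Finally, `s⁺ N` is joined to `N` by the
injective matrices `((1 - t) s⁺ + t) N`, so the projection onto its range is trivial.
-/

section PositivePart

open Matrix Topology
open scoped MatrixOrder Matrix.Norms.Frobenius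

variable {𝕜 n : Type*} [RCLike 𝕜] [Fintype n]

theorem trace_mul_nonneg {A B : Matrix n n 𝕜} (hA : A.PosSemidef) (hB : B.PosSemidef) :
    0 ≤ (A * B).trace := by
  classical
  obtain ⟨C, rfl⟩ := CStarAlgebra.nonneg_iff_eq_star_mul_self.mp hB.nonneg
  rw [← Matrix.mul_assoc, trace_mul_comm, ← Matrix.mul_assoc, star_eq_conjTranspose]
  exact (hA.mul_mul_conjTranspose_same C).trace_nonneg

theorem frobenius_norm_sq_eq_re_trace (A : Matrix n n 𝕜) :
    ‖A‖ ^ 2 = RCLike.re (Aᴴ * A).trace := by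
  rw [frobenius_norm_def, ← Real.sqrt_eq_rpow, Real.sq_sqrt (by positivity), Finset.sum_comm]
  simp_rw [trace, diag_apply, mul_apply, conjTranspose_apply, RCLike.star_def, RCLike.conj_mul,
    map_sum, ← RCLike.ofReal_pow, RCLike.ofReal_re, Real.rpow_two]

theorem isOpen_setOf_le_rank (k : ℕ) : IsOpen {M : Matrix n n 𝕜 | k ≤ M.rank} := by
  classical
  have hcont := (LinearMap.toContinuousLinearMap.toLinearMap ∘ₗ toLin'.toLinearMap :
    Matrix n n 𝕜 →ₗ[𝕜] (n → 𝕜) →L[𝕜] (n → 𝕜)).continuous_of_finiteDimensional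
  convert (isOpen_setOfPred_nat_le_rank k).preimage hcont using 1
  ext M
  simp [Matrix.rank, ← Module.finrank_eq_rank, LinearMap.rank, toLin'_apply']
  rfl

variable [DecidableEq n]

theorem re_trace_posPart_sub_mul_negPart_sub_nonpos (A B : Matrix n n 𝕜) :
    RCLike.re ((A⁺ - B⁺) * (A⁻ - B⁻)).trace ≤ 0 := by
  have hAB := trace_mul_nonneg (nonneg_iff_posSemidef.mp (CFC.posPart_nonneg A))
    (nonneg_iff_posSemidef.mp (CFC.negPart_nonneg B))
  have hBA := trace_mul_nonneg (nonneg_iff_posSemidef.mp (CFC.posPart_nonneg B))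
    (nonneg_iff_posSemidef.mp (CFC.negPart_nonneg A))
  have h : (A⁺ - B⁺) * (A⁻ - B⁻) = -(A⁺ * B⁻ + B⁺ * A⁻) := by
    rw [sub_mul, mul_sub, mul_sub, CFC.posPart_mul_negPart, CFC.posPart_mul_negPart]
    abel
  rw [h, trace_neg, trace_add, map_neg, neg_nonpos]
  exact (RCLike.nonneg_iff.mp (add_nonneg hAB hBA)).1

theorem norm_posPart_sub_posPart_le {A B : Matrix n n 𝕜} (hA : A.IsHermitian)
    (hB : B.IsHermitian) : ‖A⁺ - B⁺‖ ≤ ‖A - B‖ := by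
  have hAB : A - B = (A⁺ - B⁺) - (A⁻ - B⁻) := by
    conv_lhs => rw [← CFC.posPart_sub_negPart A hA, ← CFC.posPart_sub_negPart B hB]
    abel
  have hpos := re_trace_posPart_sub_mul_negPart_sub_nonpos A B
  have hP : (A⁺ - B⁺)ᴴ = A⁺ - B⁺ :=
    ((CFC.posPart_nonneg A).isSelfAdjoint.sub (CFC.posPart_nonneg B).isSelfAdjoint).star_eq
  have hQ : (A⁻ - B⁻)ᴴ = A⁻ - B⁻ :=
    ((CFC.negPart_nonneg A).isSelfAdjoint.sub (CFC.negPart_nonneg B).isSelfAdjoint).star_eq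
  rw [hAB]
  generalize A⁺ - B⁺ = P at *
  generalize A⁻ - B⁻ = Q at *
  refine le_of_sq_le_sq ?_ (norm_nonneg _)
  calc ‖P‖ ^ 2 ≤ ‖P‖ ^ 2 + ‖Q‖ ^ 2 - 2 * RCLike.re (P * Q).trace := by
        linarith [sq_nonneg ‖Q‖]
    _ = ‖P - Q‖ ^ 2 := by
        simp only [frobenius_norm_sq_eq_re_trace, conjTranspose_sub, hP, hQ, sub_mul, mul_sub,
          trace_sub, map_sub, trace_mul_comm Q P]
        ring

theorem lipschitzOnWith_posPart :
    LipschitzOnWith 1 (fun A : Matrix n n 𝕜 ↦ A⁺) {A | A.IsHermitian} :=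
  .of_dist_le_mul fun A hA B hB ↦ by
    simpa [dist_eq_norm] using norm_posPart_sub_posPart_le hA hB

theorem posPart_mulVec_eq_zero_of_mul {a s : Matrix n n 𝕜} (hs : s.IsHermitian)
    (has : (a - s).PosSemidef) {u : n → 𝕜} (hu : (a * s⁺) *ᵥ u = 0) : s⁺ *ᵥ u = 0 := by
  have hpos : s⁺.PosSemidef := nonneg_iff_posSemidef.mp (CFC.posPart_nonneg s)
  have hsv : s *ᵥ s⁺ *ᵥ u = s⁺ *ᵥ s⁺ *ᵥ u := by
    conv_lhs => enter [1]; rw [← CFC.posPart_sub_negPart s hs]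
    rw [sub_mulVec, mulVec_mulVec _ s⁻, CFC.negPart_mul_posPart, zero_mulVec, sub_zero]
  -- `(a - s) s⁺ u = -s⁺ s⁺ u`, so positivity of `a - s` at `s⁺ u` forces `⟪s⁺ u, s⁺ (s⁺ u)⟫ ≤ 0`.
  have hle := has.dotProduct_mulVec_nonneg (s⁺ *ᵥ u)
  rw [sub_mulVec, mulVec_mulVec, hu, zero_sub, hsv, dotProduct_neg, neg_nonneg] at hle
  have hsq := (hpos.dotProduct_mulVec_zero_iff _).mp
    (hle.antisymm (hpos.dotProduct_mulVec_nonneg _))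
  rw [← conjTranspose_mul_self_mulVec_eq_zero, hpos.1.eq, ← mulVec_mulVec, hsq]

theorem exists_forall_le_rank_posPart {K : Set (Matrix n n 𝕜)} (hK : IsCompact K) {k : ℕ}
    (hpos : ∀ a ∈ K, a.PosSemidef) (hrank : ∀ a ∈ K, k ≤ a.rank) :
    ∃ ε > 0, ∀ a ∈ K, ∀ s : Matrix n n 𝕜, s.IsHermitian → ‖s - a‖ < ε → k ≤ s⁺.rank := by
  obtain ⟨ε, hε, h⟩ := hK.exists_thickening_subset_open (isOpen_setOf_le_rank k) hrank
  refine ⟨ε, hε, fun a ha s hs hsa ↦ h (Metric.mem_thickening_iff.mpr ⟨a, ha, ?_⟩)⟩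
  rw [dist_eq_norm]
  calc ‖s⁺ - a‖ = ‖s⁺ - a⁺‖ := by
        rw [(CFC.posPart_eq_self a).mpr (nonneg_iff_posSemidef.mpr (hpos a ha))]
    _ ≤ ‖s - a‖ := norm_posPart_sub_posPart_le hs (hpos a ha).1
    _ < ε := hsa

end PositivePart

section GeneralPosition

open Module Set Topology

theorem exists_isUnit_add_finrank_range_eq {K V : Type*} [DivisionRing K] [AddCommGroup V]
    [Module K V] [FiniteDimensional K V] (f : End K V) :
    ∃ R : End K V, IsUnit (f + R) ∧ finrank K R.range = finrank K f.ker := by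
  obtain ⟨C, hC⟩ := f.ker.exists_isCompl
  obtain ⟨D, hD⟩ := f.range.exists_isCompl
  have hrank : finrank K f.ker = finrank K D := by
    have := f.finrank_range_add_finrank_ker
    have := Submodule.finrank_add_eq_of_isCompl hD
    omega
  let e := LinearEquiv.ofFinrankEq f.ker D hrank
  let R : End K V := D.subtype ∘ₗ e.toLinearMap ∘ₗ f.ker.projectionOnto C hC
  have hR (x : f.ker) : R x = e x := by simp [R]
  refine ⟨R, ?_, ?_⟩
  · rw [LinearMap.isUnit_iff_ker_eq_bot, LinearMap.ker_eq_bot']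
    intro x hx
    have hfx : f x = 0 := by
      refine Submodule.disjoint_def.mp hD.disjoint _ (f.mem_range_self x) ?_
      rw [eq_neg_of_add_eq_zero_left hx]
      exact D.neg_mem (e _).2
    have hex : e ⟨x, hfx⟩ = 0 := by
      ext
      rw [← hR, ZeroMemClass.coe_zero, ← hx, LinearMap.add_apply, hfx, zero_add]
    simpa using congrArg Subtype.val (e.map_eq_zero_iff.mp hex)
  · have : R.range = D := by
      rw [LinearMap.range_comp_of_range_eq_top, Submodule.range_subtype]
      rw [LinearMap.range_comp_of_range_eq_top _ (Submodule.range_projectionOnto hC),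
        LinearEquiv.range]
    rw [this, hrank]

variable {E F : Type*} [NormedAddCommGroup E] [NormedSpace ℝ E] [FiniteDimensional ℝ E]
  [NormedAddCommGroup F] [NormedSpace ℝ F] [FiniteDimensional ℝ F]
  {T : F → E →L[ℝ] E} {L : Set F}

theorem dimH_setOf_mem_ker_sup_le_of_isUnit (hT : LocallyLipschitz T) {R : E →L[ℝ] E}
    (hR : ∀ v ∈ L, IsUnit (T v + R)) (W : Submodule ℝ E) :
    dimH {x | ∃ v ∈ L, x ∈ (T v).ker ⊔ W} ≤
      (finrank ℝ F + finrank ℝ R.range + finrank ℝ W : ℕ) := by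
  have := FiniteDimensional.complete ℝ E
  let Ψ (q : (E →L[ℝ] E) × R.range × W) : E :=
    Ring.inverse q.1 (R.range.subtypeL q.2.1) + W.subtypeL q.2.2
  let ι (q : F × R.range × W) : (E →L[ℝ] E) × R.range × W := (T q.1 + R, q.2)
  have hι : LocallyLipschitz ι :=
    ((ContDiff.locallyLipschitz (𝕂 := ℝ) (f := fun S : E →L[ℝ] E ↦ S + R) (by fun_prop)).comp
      (hT.comp LipschitzWith.prod_fst.locallyLipschitz)).prodMk
        LipschitzWith.prod_snd.locallyLipschitz
  have hΨ (q) (hq : q.1 ∈ L) : ContDiffAt ℝ 1 Ψ (ι q) := by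
    obtain ⟨u, hu⟩ := hR q.1 hq
    have hinv : ContDiffAt ℝ 1 Ring.inverse (ι q).1 := by
      rw [← show (u : E →L[ℝ] E) = (ι q).1 from hu]
      exact contDiffAt_ringInverse ℝ u
    exact ((hinv.comp _ contDiffAt_fst).clm_apply (by fun_prop)).add (by fun_prop)
  -- If `T v z = 0`, then `z = (T v + R)⁻¹ (R z)`.
  have hsub : {x | ∃ v ∈ L, x ∈ (T v).ker ⊔ W} ⊆ (Ψ ∘ ι) '' {q | q.1 ∈ L} := by
    rintro x ⟨v, hv, hx⟩
    obtain ⟨z, hz, w, hw, rfl⟩ := Submodule.mem_sup.mp hx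
    refine ⟨(v, ⟨R z, z, rfl⟩, ⟨w, hw⟩), hv, ?_⟩
    have hRz : R z = (T v + R) z := by simp [show T v z = 0 from hz]
    simp only [Function.comp_apply, Ψ, ι, Submodule.subtypeL_apply, hRz]
    rw [← mul_apply_eq_comp, Ring.inverse_mul_cancel _ (hR v hv)]
    rfl
  calc dimH {x | ∃ v ∈ L, x ∈ (T v).ker ⊔ W} ≤ dimH ((Ψ ∘ ι) '' {q | q.1 ∈ L}) := dimH_mono hsub
    _ ≤ dimH {q : F × R.range × W | q.1 ∈ L} := by
        refine dimH_image_le_of_locally_lipschitzOn fun q hq ↦ ?_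
        obtain ⟨K, t, ht, hK⟩ := (hΨ q hq).exists_lipschitzOnWith
        obtain ⟨K', t', ht', hK'⟩ := hι q
        exact ⟨K * K', t' ∩ ι ⁻¹' t, mem_nhdsWithin_of_mem_nhds
          (Filter.inter_mem ht' (hι.continuous.continuousAt.preimage_mem_nhds ht)),
          hK.comp (hK'.mono inter_subset_left) fun _ h ↦ h.2⟩
    _ ≤ dimH (univ : Set (F × R.range × W)) := dimH_mono (subset_univ _)
    _ = (finrank ℝ F + finrank ℝ R.range + finrank ℝ W : ℕ) := by
        rw [Real.dimH_univ_eq_finrank, finrank_prod, finrank_prod, add_assoc]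

theorem dimH_setOf_mem_ker_sup_le (hT : LocallyLipschitz T) {c : ℕ}
    (hc : ∀ v ∈ L, finrank ℝ (T v).ker ≤ c) (W : Submodule ℝ E) :
    dimH {x | ∃ v ∈ L, x ∈ (T v).ker ⊔ W} ≤ (finrank ℝ F + c + finrank ℝ W : ℕ) := by
  have := FiniteDimensional.complete ℝ E
  have hR (v : F) : ∃ R : E →L[ℝ] E,
      IsUnit (T v + R) ∧ finrank ℝ R.range = finrank ℝ (T v).ker := by
    obtain ⟨R, hR, hrank⟩ := exists_isUnit_add_finrank_range_eq (T v : End ℝ E)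
    exact ⟨LinearMap.toContinuousLinearMap R, hR.map (End.toContinuousLinearMap (𝕜 := ℝ) E), hrank⟩
  choose R hR hrank using hR
  obtain ⟨t, htL, ht, hcover⟩ := TopologicalSpace.countable_cover_nhdsWithin (s := L)
    (f := fun v ↦ {v' | IsUnit (T v' + R v)}) fun v _ ↦ mem_nhdsWithin_of_mem_nhds <|
      (hT.continuous.add continuous_const).continuousAt.preimage_mem_nhds
        (Units.isOpen.mem_nhds (hR v))
  have hsub : {x | ∃ v ∈ L, x ∈ (T v).ker ⊔ W} ⊆
      ⋃ v₀ ∈ t, {x | ∃ v ∈ {v | IsUnit (T v + R v₀)}, x ∈ (T v).ker ⊔ W} := by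
    rintro x ⟨v, hv, hx⟩
    obtain ⟨v₀, hv₀, hu⟩ := mem_iUnion₂.mp (hcover hv)
    exact mem_iUnion₂.mpr ⟨v₀, hv₀, v, hu, hx⟩
  refine (dimH_mono hsub).trans ?_
  rw [dimH_bUnion ht]
  refine iSup₂_le fun v hv ↦
    (dimH_setOf_mem_ker_sup_le_of_isUnit hT (fun _ h ↦ h) W).trans ?_
  rw [hrank]
  gcongr
  exact hc v (htL hv)

section Matrix

open Matrix
open scoped Matrix.Norms.Frobenius

variable {n : Type*} [Fintype n] [DecidableEq n]

theorem dimH_setOf_mem_ker_mulVecLin_sup_le {T : F → Matrix n n ℂ} (hT : LocallyLipschitz T)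
    (k : ℕ) (W : Submodule ℂ (n → ℂ)) :
    dimH {x | ∃ v ∈ {v | k ≤ (T v).rank}, x ∈ (T v).mulVecLin.ker ⊔ W} ≤
      (finrank ℝ F + 2 * (Fintype.card n - k) + 2 * finrank ℂ W : ℕ) := by
  let Λ : Matrix n n ℂ →ₗ[ℝ] (n → ℂ) →L[ℝ] n → ℂ :=
    { toFun M := (LinearMap.toContinuousLinearMap M.mulVecLin).restrictScalars ℝ
      map_add' M N := by ext; simp
      map_smul' r M := by ext; simp }
  have hΛ : LocallyLipschitz Λ :=
    Λ.toContinuousLinearMap.contDiff.locallyLipschitz (𝕂 := ℝ)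
  have hc (v : F) (hv : v ∈ {v | k ≤ (T v).rank}) :
      finrank ℝ (Λ (T v)).ker ≤ 2 * (Fintype.card n - k) := by
    have hdim : (T v).rank + finrank ℂ (T v).mulVecLin.ker = Fintype.card n := by
      simpa [Matrix.rank] using (T v).mulVecLin.finrank_range_add_finrank_ker
    have hreal : finrank ℝ (Λ (T v)).ker = 2 * finrank ℂ (T v).mulVecLin.ker :=
      finrank_real_of_complex (T v).mulVecLin.ker
    have : k ≤ (T v).rank := hv
    omega
  have := dimH_setOf_mem_ker_sup_le (hΛ.comp hT) hc (W.restrictScalars ℝ)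
  have hW : finrank ℝ (W.restrictScalars ℝ) = 2 * finrank ℂ W := finrank_real_of_complex W
  rw [hW] at this
  refine (dimH_mono ?_).trans this
  rintro x ⟨v, hv, hx⟩
  refine ⟨v, hv, ?_⟩
  obtain ⟨y, hy, z, hz, rfl⟩ := Submodule.mem_sup.mp hx
  exact Submodule.add_mem_sup hy hz

theorem exists_forall_linearIndependent_mulVec {κ : Type*} [Countable κ] {F : κ → Type*}
    [∀ q, NormedAddCommGroup (F q)] [∀ q, NormedSpace ℝ (F q)] [∀ q, FiniteDimensional ℝ (F q)]
    {T : ∀ q, F q → Matrix n n ℂ} (hT : ∀ q, LocallyLipschitz (T q)) {d k m : ℕ}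
    (hF : ∀ q, finrank ℝ (F q) ≤ d) (hm : m ≤ k - d / 2) :
    ∃ N : Fin m → n → ℂ, ∀ q v, k ≤ (T q v).rank →
      LinearIndependent ℂ fun i ↦ T q v *ᵥ N i := by
  by_cases! hk : Fintype.card n < k
  · exact ⟨0, fun q v hv ↦ absurd (hv.trans (rank_le_card_width _)) hk.not_ge⟩
  induction m with
  | zero => exact ⟨0, fun _ _ _ ↦ linearIndependent_empty_type⟩
  | succ m ih =>
    obtain ⟨N, hN⟩ := ih (by omega)
    let W : Submodule ℂ (n → ℂ) := Submodule.span ℂ (range N)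
    let bad (q : κ) : Set (n → ℂ) :=
      {x | ∃ v ∈ {v | k ≤ (T q v).rank}, x ∈ (T q v).mulVecLin.ker ⊔ W}
    -- The new column must avoid the `bad q`, of dimension at most `d + 2 (card n - k) + 2 m`, which
    -- is less than the real dimension `2 card n` of the ambient space.
    have hbad : dimH (⋃ q, bad q) < finrank ℝ (n → ℂ) := by
      have hW : finrank ℂ W ≤ m :=
        (finrank_range_le_card (R := ℂ) N).trans_eq (Fintype.card_fin m)
      rw [dimH_iUnion, finrank_real_of_complex, finrank_pi]
      refine (iSup_le fun q ↦ (dimH_setOf_mem_ker_mulVecLin_sup_le (hT q) k W).trans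
        (Nat.cast_le.mpr (?_ : _ ≤ d + 2 * (Fintype.card n - k) + 2 * m))).trans_lt ?_
      · have := hF q
        omega
      · exact_mod_cast (by omega)
    obtain ⟨x, hx⟩ := (dense_compl_of_dimH_lt_finrank hbad).nonempty
    refine ⟨Fin.snoc N x, fun q v hv ↦ ?_⟩
    have hsnoc : (fun i ↦ T q v *ᵥ (Fin.snoc N x : Fin (m + 1) → n → ℂ) i) =
        Fin.snoc (fun i ↦ T q v *ᵥ N i) (T q v *ᵥ x) := by
      funext i
      refine Fin.lastCases ?_ (fun j ↦ ?_) i <;> simp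
    rw [hsnoc, linearIndependent_finSnoc]
    refine ⟨hN q v hv, fun hspan ↦ hx (mem_iUnion.mpr ⟨q, v, hv, ?_⟩)⟩
    rw [sup_comm, ← Submodule.comap_map_eq, Submodule.mem_comap, Submodule.map_span, ← range_comp]
    exact hspan

end Matrix

end GeneralPosition

section CoveringDimension

open Set Topology

variable {X : Type*} [TopologicalSpace X] [T2Space X] [CompactSpace X] {d : ℕ}

theorem HasCovDimLE.exists_partitionOfUnity (hX : HasCovDimLE X d) {ι : Type*} {U : ι → Set X}
    (hU : ∀ i, IsOpen (U i)) (hcover : ⋃ i, U i = univ) :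
    ∃ (𝒱 : Finset (Set X)) (f : PartitionOfUnity 𝒱 X),
      (∀ V, ∃ i, ∀ x, f V x ≠ 0 → x ∈ U i) ∧ ∀ x, (f.finsupport x).card ≤ d + 1 := by
  obtain ⟨𝒲, hopen, hcover𝒲, hrefine, horder⟩ :=
    hX (range U) (forall_mem_range.mpr hU) (by rwa [sUnion_range])
  obtain ⟨𝒱, h𝒱𝒲, hfin, hcover𝒱⟩ := isCompact_univ.elim_finite_subcover_image (c := id) hopen
    (by rw [← hcover𝒲, sUnion_eq_biUnion]; rfl)
  lift 𝒱 to Finset (Set X) using hfin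
  obtain ⟨f, hf⟩ := PartitionOfUnity.exists_isSubordinate (isClosed_univ (X := X))
    (fun V : 𝒱 ↦ (V : Set X)) (fun V ↦ hopen _ (h𝒱𝒲 V.2))
    (hcover𝒱.trans_eq (biUnion_eq_iUnion _ _))
  have hmem (V : 𝒱) (x : X) (hV : f V x ≠ 0) : x ∈ (V : Set X) := hf V (subset_tsupport _ hV)
  refine ⟨𝒱, f, fun V ↦ ?_, fun x ↦ ?_⟩
  · obtain ⟨_, ⟨i, rfl⟩, hi⟩ := hrefine V (h𝒱𝒲 V.2)
    exact ⟨i, fun x hx ↦ hi (hmem V x hx)⟩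
  · obtain ⟨hfin, hcard⟩ := horder x
    refine le_trans ?_ hcard
    rw [← Finset.card_map (Function.Embedding.subtype _), ← ncard_coe_finset]
    refine ncard_le_ncard (fun W hW ↦ ?_) hfin
    obtain ⟨V, hV, rfl⟩ := Finset.mem_map.mp hW
    exact ⟨h𝒱𝒲 V.2, hmem V x ((f.mem_finsupport x).mp hV)⟩

theorem HasCovDimLE.exists_continuous_forall_mem_convex (hX : HasCovDimLE X d) {E : Type*}
    [AddCommGroup E] [Module ℝ E] [TopologicalSpace E] [ContinuousAdd E] [ContinuousSMul ℝ E]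
    {t : X → Set E} (ht : ∀ x, Convex ℝ (t x)) (H : ∀ x, ∃ c, ∀ᶠ y in 𝓝 x, c ∈ t y) :
    ∃ (g : C(X, E)) (B : Finset E), (∀ x, g x ∈ t x) ∧ (∀ b ∈ B, ∃ x, b ∈ t x) ∧
      ∀ x, ∃ S ⊆ B, S.card ≤ d + 1 ∧ g x ∈ convexHull ℝ (S : Set E) := by
  classical
  choose c hc using H
  obtain ⟨𝒱, f, hf, hcard⟩ := hX.exists_partitionOfUnity
    (U := fun x ↦ interior {y | c x ∈ t y}) (fun _ ↦ isOpen_interior)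
    (iUnion_eq_univ_iff.mpr fun x ↦ ⟨x, mem_interior_iff_mem_nhds.mpr (hc x)⟩)
  choose z hz using hf
  let g : C(X, E) := ⟨fun x ↦ ∑ᶠ V, f V x • c (z V),
    f.continuous_finsum_smul fun _ _ _ ↦ continuousAt_const⟩
  have hg {x : X} {s : Set E} (hs : Convex ℝ s) (hmem : ∀ V, f V x ≠ 0 → c (z V) ∈ s) :
      g x ∈ s :=
    f.finsum_smul_mem_convex (g := fun V _ ↦ c (z V)) (mem_univ x) hmem hs
  refine ⟨g, Finset.univ.image (c ∘ z), fun x ↦ hg (ht x) fun V hV ↦ ?_, fun b hb ↦ ?_, fun x ↦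
    ⟨(f.finsupport x).image (c ∘ z), Finset.image_subset_image (Finset.subset_univ _),
      Finset.card_image_le.trans (hcard x), hg (convex_convexHull ℝ _) fun V hV ↦ ?_⟩⟩
  · exact interior_subset (s := {y | c (z V) ∈ t y}) (hz V x hV)
  · obtain ⟨V, -, rfl⟩ := Finset.mem_image.mp hb
    exact ⟨z V, (hc (z V)).self_of_nhds⟩
  · exact subset_convexHull ℝ _
      (Finset.mem_image_of_mem (c ∘ z) ((f.mem_finsupport x).mpr hV))

end CoveringDimension

open Matrix Topology in
open scoped MatrixOrder Matrix.Norms.L2Operator in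
theorem eventually_posSemidef_add_smul_one {n : Type*} [Finite n] [DecidableEq n] {δ : ℝ}
    (hδ : 0 < δ) : ∀ᶠ A : Matrix n n ℂ in 𝓝 0, A.IsHermitian →
    (A + δ • (1 : Matrix n n ℂ)).PosSemidef := by
  have := Fintype.ofFinite n
  filter_upwards [Metric.ball_mem_nhds 0 hδ] with A hA hherm
  rw [mem_ball_zero_iff] at hA
  rw [← Algebra.algebraMap_eq_smul_one, ← nonneg_iff_posSemidef]
  calc (0 : Matrix n n ℂ) ≤ A + algebraMap ℝ _ ‖A‖ :=
        neg_le_iff_add_nonneg.mp (IsSelfAdjoint.neg_algebraMap_norm_le_self hherm)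
    _ ≤ A + algebraMap ℝ _ δ := by gcongr

section InjectiveSelection

open Matrix Topology
open scoped MatrixOrder Matrix.Norms.Frobenius

theorem isHermitian_of_le {𝕜 n : Type*} [RCLike 𝕜] {A B : Matrix n n 𝕜} (hB : B.IsHermitian)
    (h : A ≤ B) : A.IsHermitian := by
  simpa using hB.sub (le_iff.mp h).1

variable {n : Type*} [Fintype n] [DecidableEq n]

theorem lipschitzWith_posPart_add {𝕜 : Type*} [RCLike 𝕜] {s : Set (Matrix n n 𝕜)}
    (hs : ∀ b ∈ s, b.IsHermitian) {b : Matrix n n 𝕜} (hb : b.IsHermitian) :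
    LipschitzWith 1 fun v : vectorSpan ℝ s ↦ (b + v)⁺ := by
  have hspan : vectorSpan ℝ s ≤ selfAdjoint.submodule ℝ (Matrix n n 𝕜) := by
    refine Submodule.span_le.mpr ?_
    rintro _ ⟨x, hx, y, hy, rfl⟩
    exact (hs x hx).sub (hs y hy)
  refine .of_dist_le_mul fun v w ↦ ?_
  simpa [dist_eq_norm] using
    norm_posPart_sub_posPart_le (hb.add (hspan v.2)) (hb.add (hspan w.2))

theorem finrank_vectorSpan_finset_add_one_le {K V P : Type*} [DivisionRing K] [AddCommGroup V]
    [Module K V] [AddTorsor V P] {s : Finset P} (hs : s.Nonempty) :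
    Module.finrank K (vectorSpan K (s : Set P)) + 1 ≤ s.card := by
  have := hs.to_subtype
  have hrange : (s : Set P) = Set.range ((↑) : s → P) := by simp
  rw [hrange]
  exact (finrank_vectorSpan_range_add_one_le K ((↑) : s → P)).trans_eq (Fintype.card_coe s)

theorem exists_forall_injective_posPart_mul (B : Finset (Matrix n n ℂ))
    (hB : ∀ b ∈ B, b.IsHermitian) (d k : ℕ) :
    ∃ N : Matrix n (Fin (k - d / 2)) ℂ, ∀ S ⊆ B, S.card ≤ d + 1 →
      ∀ s ∈ convexHull ℝ (S : Set (Matrix n n ℂ)), k ≤ s⁺.rank →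
        Function.Injective (s⁺ * N).mulVec := by
  let κ := {q : B.powerset × B //
    (q.1 : Finset (Matrix n n ℂ)).card ≤ d + 1 ∧ (q.2 : Matrix n n ℂ) ∈ q.1.1}
  let F (q : κ) := vectorSpan ℝ (q.1.1.1 : Set (Matrix n n ℂ))
  have hF (q : κ) : Module.finrank ℝ (F q) ≤ d :=
    Nat.le_of_succ_le_succ ((finrank_vectorSpan_finset_add_one_le ⟨_, q.2.2⟩).trans q.2.1)
  have hlip (q : κ) : LocallyLipschitz fun v : F q ↦ (q.1.2 + v : Matrix n n ℂ)⁺ :=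
    (lipschitzWith_posPart_add (fun b hb ↦ hB b (Finset.mem_powerset.mp q.1.1.2 hb))
      (hB _ q.1.2.2)).locallyLipschitz
  obtain ⟨N, hN⟩ := exists_forall_linearIndependent_mulVec hlip hF (le_refl (k - d / 2))
  refine ⟨(Matrix.of N)ᵀ, fun S hS hcard s hs hrank ↦ mulVec_injective_iff.mpr ?_⟩
  obtain ⟨b, hb⟩ := convexHull_nonempty_iff.mp ⟨s, hs⟩
  have hv : s - b ∈ vectorSpan ℝ (S : Set (Matrix n n ℂ)) :=
    vsub_mem_vectorSpan_of_mem_affineSpan_of_mem_affineSpan (convexHull_subset_affineSpan _ hs)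
      (subset_affineSpan ℝ _ hb)
  have h := hN ⟨(⟨S, Finset.mem_powerset.mpr hS⟩, ⟨b, hS hb⟩), hcard, hb⟩ ⟨s - b, hv⟩
  simp only [add_sub_cancel] at h
  exact h hrank

theorem exists_eventually_mem_Iic_inter_ball {ε : ℝ} (hε : 0 < ε) (a₀ : Matrix n n ℂ) :
    ∃ c, ∀ᶠ a in 𝓝 a₀, (a - a₀).IsHermitian → c ∈ Set.Iic a ∩ Metric.ball a ε := by
  obtain ⟨δ, hδε, hδ⟩ : ∃ δ : ℝ, a₀ - δ • 1 ∈ Metric.ball a₀ ε ∧ 0 < δ := by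
    have hcont : Continuous fun δ : ℝ ↦ a₀ - δ • (1 : Matrix n n ℂ) := by fun_prop
    have hball : ∀ᶠ δ : ℝ in 𝓝[>] 0, a₀ - δ • 1 ∈ Metric.ball a₀ ε := by
      refine (hcont.tendsto' 0 a₀ ?_).eventually_mem (Metric.ball_mem_nhds a₀ hε) |>.filter_mono
        nhdsWithin_le_nhds
      rw [zero_smul, sub_zero]
    exact (hball.and self_mem_nhdsWithin).exists
  refine ⟨a₀ - δ • 1, ?_⟩
  have hsub : Filter.Tendsto (fun a ↦ a - a₀) (𝓝 a₀) (𝓝 0) :=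
    Continuous.tendsto' (by fun_prop) _ _ (sub_self a₀)
  filter_upwards [hsub.eventually (eventually_posSemidef_add_smul_one hδ),
    Metric.isOpen_ball.mem_nhds (Metric.mem_ball_comm.mp hδε)] with a hpos hball hherm
  refine ⟨le_iff.mpr ?_, Metric.mem_ball_comm.mp hball⟩
  rw [← sub_add]
  exact hpos hherm

omit [DecidableEq n] in
theorem HasCovDimLE.exists_posSemidef_injective_mul {X : Type*} [TopologicalSpace X]
    [T2Space X] [CompactSpace X] {d k : ℕ} (hX : HasCovDimLE X d) (a : C(X, Matrix n n ℂ))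
    (ha : ∀ x, (a x).PosSemidef) (hrank : ∀ x, k ≤ (a x).rank) :
    ∃ (c : C(X, Matrix n n ℂ)) (N : Matrix n (Fin (k - d / 2)) ℂ),
      (∀ x, (c x).PosSemidef) ∧ ∀ x, Function.Injective (a x * (c x * N)).mulVec := by
  classical
  obtain ⟨ε, hε, hrank⟩ := exists_forall_le_rank_posPart (isCompact_range a.continuous)
    (Set.forall_mem_range.mpr ha) (Set.forall_mem_range.mpr hrank)
  obtain ⟨s, B, hs, hB, hsB⟩ := hX.exists_continuous_forall_mem_convex
    (t := fun x ↦ Set.Iic (a x) ∩ Metric.ball (a x) ε)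
    (fun x ↦ (convex_Iic _).inter (convex_ball _ _)) fun x ↦ by
      obtain ⟨c, hc⟩ := exists_eventually_mem_Iic_inter_ball hε (a x)
      exact ⟨c, (a.continuous.tendsto x |>.eventually hc).mono fun y hy ↦
        hy ((ha y).1.sub (ha x).1)⟩
  have hherm (x : X) : (s x).IsHermitian := isHermitian_of_le (ha x).1 (hs x).1
  obtain ⟨N, hN⟩ := exists_forall_injective_posPart_mul B
    (fun b hb ↦ (hB b hb).elim fun x hx ↦ isHermitian_of_le (ha x).1 hx.1) d k
  have hpos (x : X) : (s x)⁺.PosSemidef := nonneg_iff_posSemidef.mp (CFC.posPart_nonneg _)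
  let c : C(X, Matrix n n ℂ) :=
    ⟨fun x ↦ (s x)⁺, lipschitzOnWith_posPart.continuousOn.comp_continuous s.continuous hherm⟩
  refine ⟨c, N, hpos, fun x ↦ ?_⟩
  obtain ⟨S, hSB, hcard, hsS⟩ := hsB x
  have hinj := hN S hSB hcard (s x) hsS
    (hrank _ ⟨x, rfl⟩ _ (hherm x) (mem_ball_iff_norm.mp (hs x).2))
  rw [← coe_mulVecLin, injective_iff_map_eq_zero] at hinj ⊢
  refine fun w hw ↦ hinj w ?_
  rw [mulVecLin_apply, ← mulVec_mulVec]
  refine posPart_mulVec_eq_zero_of_mul (hherm x) (le_iff.mp (hs x).1) ?_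
  rw [mulVec_mulVec, Matrix.mul_assoc]
  exact hw

end InjectiveSelection

section SplittingHomotopy

open Matrix

theorem rank_add_of_mul_eq {K l n : Type*} [Field K] [Fintype l] [Fintype n]
    {P S : Matrix l n K} {E : Matrix n n K} {F : Matrix l l K}
    (hPE : P * E = P) (hSE : S * E = 0) (hFP : F * P = P) (hFS : F * S = 0) :
    (P + S).rank = P.rank + S.rank := by
  have hdisj : Disjoint P.mulVecLin.range S.mulVecLin.range := by
    rw [Submodule.disjoint_def]
    rintro _ ⟨u, rfl⟩ ⟨v, hv⟩
    simp only [mulVecLin_apply] at hv ⊢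
    rw [← hFP, ← mulVec_mulVec, ← hv, mulVec_mulVec, hFS, zero_mulVec]
  have hsup : (P + S).mulVecLin.range = P.mulVecLin.range ⊔ S.mulVecLin.range := by
    refine le_antisymm ?_ (sup_le ?_ ?_)
    · rw [mulVecLin_add]
      exact LinearMap.range_add_le _ _
    · rintro _ ⟨u, rfl⟩
      exact ⟨E *ᵥ u, by simp [hPE, hSE]⟩
    · rintro _ ⟨u, rfl⟩
      exact ⟨u - E *ᵥ u, by simp [mulVec_sub, hPE, hSE]⟩
  have := Submodule.finrank_sup_add_finrank_inf_eq P.mulVecLin.range S.mulVecLin.range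
  rwa [hdisj.eq_bot, finrank_bot, add_zero, ← hsup] at this

variable {𝕜 m n : Type*} [RCLike 𝕜]

theorem posDef_segment {A B : Matrix n n 𝕜} (hA : A.PosDef) (hB : B.PosDef) (t : I) :
    ((1 - t : ℝ) • A + (t : ℝ) • B).PosDef := by
  rcases t.2.1.eq_or_lt with ht | ht
  · simpa [← ht] using hA
  · exact .posSemidef_add (hA.posSemidef.smul (sub_nonneg.mpr t.2.2)) (hB.smul ht)

variable [Fintype m] [Fintype n] {b : Matrix n n 𝕜} {V : Matrix n m 𝕜}

theorem injective_mulVec_of_mul (h : Function.Injective (b * V).mulVec) :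
    Function.Injective V.mulVec := by
  refine Function.Injective.of_comp (f := b.mulVec) ?_
  simpa only [Function.comp_def, mulVec_mulVec] using h

theorem posDef_conjTranspose_mul_mul (hb : b.PosSemidef)
    (hbV : Function.Injective (b * V).mulVec) : (Vᴴ * b * V).PosDef := by
  classical
  refine (hb.conjTranspose_mul_mul_same V).posDef_iff_isUnit.mpr ?_
  rw [← mulVec_injective_iff_isUnit, ← coe_mulVecLin, injective_iff_map_eq_zero]
  intro w hw
  refine hbV (?_ : (b * V) *ᵥ w = (b * V) *ᵥ 0)
  rw [mulVec_zero, ← mulVec_mulVec, ← hb.dotProduct_mulVec_zero_iff, star_mulVec,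
    ← dotProduct_mulVec, mulVec_mulVec, mulVec_mulVec, ← mulVecLin_apply, hw, dotProduct_zero]

variable [DecidableEq m]

theorem rank_mul_mul_conjTranspose {Y : Matrix n m 𝕜} {K : Matrix m m 𝕜}
    (hK : IsUnit K) (hYV : IsUnit (Yᴴ * V)) : (Y * K * Yᴴ).rank = Fintype.card m := by
  refine le_antisymm ((rank_mul_le_right _ _).trans (rank_le_card_height _)) ?_
  have hu : IsUnit (Vᴴ * (Y * K * Yᴴ) * V) := by
    have : Vᴴ * (Y * K * Yᴴ) * V = (Yᴴ * V)ᴴ * K * (Yᴴ * V) := by simp [Matrix.mul_assoc]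
    rw [this]
    exact (hYV.star.mul hK).mul hYV
  rw [← rank_of_isUnit _ hu]
  exact (rank_mul_le_left _ _).trans (rank_mul_le_right _ _)

theorem rank_mul_mul_conjTranspose_add {Y : Matrix n m 𝕜} {K : Matrix m m 𝕜} {S : Matrix n n 𝕜}
    (hK : IsUnit K) (hYV : IsUnit (Yᴴ * V)) (hS : S.IsHermitian) (hSV : S * V = 0) :
    (Y * K * Yᴴ + S).rank = Fintype.card m + S.rank := by
  obtain ⟨R, hR⟩ := hYV.exists_right_inv
  have hR' : Rᴴ * (Vᴴ * Y) = 1 := by simpa using congrArg conjTranspose hR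
  have hVS : Vᴴ * S = 0 := by simpa [hS.eq] using congrArg conjTranspose hSV
  rw [← rank_mul_mul_conjTranspose hK hYV]
  refine rank_add_of_mul_eq (E := V * R * Yᴴ) (F := Y * Rᴴ * Vᴴ) ?_ ?_ ?_ ?_
  · calc Y * K * Yᴴ * (V * R * Yᴴ) = Y * K * (Yᴴ * V * R) * Yᴴ := by simp only [Matrix.mul_assoc]
      _ = Y * K * Yᴴ := by rw [hR, Matrix.mul_one]
  · rw [← Matrix.mul_assoc, ← Matrix.mul_assoc, hSV, Matrix.zero_mul, Matrix.zero_mul]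
  · calc Y * Rᴴ * Vᴴ * (Y * K * Yᴴ) = Y * (Rᴴ * (Vᴴ * Y)) * K * Yᴴ := by
          simp only [Matrix.mul_assoc]
      _ = Y * K * Yᴴ := by rw [hR', Matrix.mul_one]
  · rw [Matrix.mul_assoc, hVS, Matrix.mul_zero]

/-- The orthogonal projection onto the column space of a matrix `V` with independent columns. -/
noncomputable def colProj (V : Matrix n m 𝕜) : Matrix n n 𝕜 :=
  V * (Vᴴ * V)⁻¹ * Vᴴ

/-- The Schur complement of `b` with respect to the columns of `V`: what is left of the positive
matrix `b` after splitting off the summand `bV (Vᴴ b V)⁻¹ (bV)ᴴ`. -/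
noncomputable def schurCompl (b : Matrix n n 𝕜) (V : Matrix n m 𝕜) : Matrix n n 𝕜 :=
  b - b * V * (Vᴴ * b * V)⁻¹ * (Vᴴ * b)

/-- The path from a positive matrix `b` to `colProj V + schurCompl b V` which fixes the Schur
complement and deforms the other summand `bV (Vᴴ b V)⁻¹ (bV)ᴴ` of `b` into `V (Vᴴ V)⁻¹ Vᴴ` by moving
`bV` and the middle factor along segments. -/
noncomputable def splitPath (b : Matrix n n 𝕜) (V : Matrix n m 𝕜) (t : I) : Matrix n n 𝕜 :=
  ((1 - t : ℝ) • (b * V) + (t : ℝ) • V) * ((1 - t : ℝ) • (Vᴴ * b * V)⁻¹ + (t : ℝ) • (Vᴴ * V)⁻¹) *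
    ((1 - t : ℝ) • (b * V) + (t : ℝ) • V)ᴴ + schurCompl b V

section Injective

variable (hV : Function.Injective V.mulVec)
include hV

theorem isUnit_conjTranspose_mul_self : IsUnit (Vᴴ * V) :=
  (PosDef.conjTranspose_mul_self V hV).isUnit

theorem colProj_mul_self : colProj V * V = V := by
  rw [colProj, Matrix.mul_assoc, Matrix.mul_assoc,
    nonsing_inv_mul _ ((isUnit_iff_isUnit_det _).mp (isUnit_conjTranspose_mul_self hV)),
    Matrix.mul_one]

theorem isStarProjection_colProj : IsStarProjection (colProj V) where
  isIdempotentElem := by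
    have h : colProj V * (V * (Vᴴ * V)⁻¹ * Vᴴ) = V * (Vᴴ * V)⁻¹ * Vᴴ := by
      rw [← Matrix.mul_assoc, ← Matrix.mul_assoc, colProj_mul_self hV]
    exact h
  isSelfAdjoint := isHermitian_mul_mul_conjTranspose V (isHermitian_conjTranspose_mul_self V).inv

theorem rank_colProj : (colProj V).rank = Fintype.card m :=
  have hu := isUnit_conjTranspose_mul_self hV
  rank_mul_mul_conjTranspose (isUnit_nonsing_inv_iff.mpr hu) hu

end Injective

theorem splitPath_zero (hb : b.PosSemidef) : splitPath b V 0 = b := by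
  simp [splitPath, schurCompl, hb.1.eq]

theorem splitPath_one : splitPath b V 1 = colProj V + schurCompl b V := by
  simp [splitPath, colProj]

section Splitting

variable (hb : b.PosSemidef) (hbV : Function.Injective (b * V).mulVec)
include hb hbV

theorem schurCompl_mul_eq_zero : schurCompl b V * V = 0 := by
  have hu := (isUnit_iff_isUnit_det _).mp (posDef_conjTranspose_mul_mul hb hbV).isUnit
  rw [schurCompl, Matrix.sub_mul, Matrix.mul_assoc _ (Vᴴ * b), Matrix.mul_assoc (b * V),
    nonsing_inv_mul _ hu, Matrix.mul_one, sub_self]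

theorem posSemidef_schurCompl : (schurCompl b V).PosSemidef := by
  classical
  have hG := posDef_conjTranspose_mul_mul hb hbV
  have := hG.isUnit.invertible
  have hblock : (fromBlocks (Vᴴ * b * V) (Vᴴ * b) (Vᴴ * b)ᴴ b).PosSemidef := by
    convert hb.conjTranspose_mul_mul_same (fromCols V (1 : Matrix n n 𝕜)) using 1
    simp [conjTranspose_fromCols_eq_fromRows_conjTranspose, fromRows_mul, hb.1.eq]
  simpa [schurCompl, hb.1.eq] using (PosDef.fromBlocks₁₁ _ _ hG).mp hblock

theorem posDef_splitPath_middle (t : I) :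
    ((1 - t : ℝ) • (Vᴴ * b * V)⁻¹ + (t : ℝ) • (Vᴴ * V)⁻¹).PosDef :=
  posDef_segment (posDef_conjTranspose_mul_mul hb hbV).inv
    (PosDef.conjTranspose_mul_self V (injective_mulVec_of_mul hbV)).inv t

theorem posSemidef_splitPath (t : I) : (splitPath b V t).PosSemidef :=
  ((posDef_splitPath_middle hb hbV t).posSemidef.mul_mul_conjTranspose_same _).add
    (posSemidef_schurCompl hb hbV)

theorem rank_splitPath (t : I) : (splitPath b V t).rank = b.rank := by
  have hrank (t : I) : (splitPath b V t).rank = Fintype.card m + (schurCompl b V).rank := by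
    refine rank_mul_mul_conjTranspose_add (V := V) (posDef_splitPath_middle hb hbV t).isUnit ?_
      (posSemidef_schurCompl hb hbV).1 (schurCompl_mul_eq_zero hb hbV)
    have := posDef_segment (posDef_conjTranspose_mul_mul hb hbV)
      (PosDef.conjTranspose_mul_self V (injective_mulVec_of_mul hbV)) t
    simpa [Matrix.add_mul, hb.1.eq] using this.isUnit
  rw [hrank t, ← hrank 0, splitPath_zero hb]

theorem splitPath_one_mul_colProj : splitPath b V 1 * colProj V = colProj V := by
  have hS : schurCompl b V * colProj V = 0 := by
    rw [colProj, ← Matrix.mul_assoc, ← Matrix.mul_assoc, schurCompl_mul_eq_zero hb hbV,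
      Matrix.zero_mul, Matrix.zero_mul]
  rw [splitPath_one, Matrix.add_mul, hS, add_zero,
    (isStarProjection_colProj (injective_mulVec_of_mul hbV)).isIdempotentElem.eq]

theorem colProj_mul_splitPath_one : colProj V * splitPath b V 1 = colProj V := by
  have hp := (isStarProjection_colProj (injective_mulVec_of_mul hbV)).isSelfAdjoint.star_eq
  have hh : star (splitPath b V 1) = splitPath b V 1 := (posSemidef_splitPath hb hbV 1).1
  simpa only [star_mul, hp, hh] using congrArg star (splitPath_one_mul_colProj hb hbV)

end Splitting

section Continuity

variable {Y : Type*} [TopologicalSpace Y]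

theorem continuous_matrix_inv {K : Type*} [Field K] [TopologicalSpace K] [IsTopologicalRing K]
    [ContinuousInv₀ K] {F : Y → Matrix m m K} (hF : Continuous F)
    (hu : ∀ y, IsUnit (F y)) : Continuous fun y ↦ (F y)⁻¹ := by
  simp only [inv_def, Ring.inverse_eq_inv']
  exact (hF.matrix_det.inv₀ fun y ↦ ((isUnit_iff_isUnit_det _).mp (hu y)).ne_zero).smul
    hF.matrix_adjugate

theorem continuous_colProj {V : Y → Matrix n m 𝕜} (hV : Continuous V)
    (hinj : ∀ y, Function.Injective (V y).mulVec) : Continuous fun y ↦ colProj (V y) :=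
  (hV.matrix_mul (continuous_matrix_inv (hV.matrix_conjTranspose.matrix_mul hV)
    fun y ↦ isUnit_conjTranspose_mul_self (hinj y))).matrix_mul hV.matrix_conjTranspose

theorem continuous_splitPath {b : Y → Matrix n n 𝕜} {V : Y → Matrix n m 𝕜}
    (hb : Continuous b) (hV : Continuous V)
    (hpos : ∀ y, (b y).PosSemidef) (hinj : ∀ y, Function.Injective (b y * V y).mulVec) :
    Continuous fun q : I × Y ↦ splitPath (b q.2) (V q.2) q.1 := by
  have hVV := (continuous_matrix_inv (hV.matrix_conjTranspose.matrix_mul hV)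
    fun y ↦ isUnit_conjTranspose_mul_self (injective_mulVec_of_mul (hinj y))).comp
    (continuous_snd (X := I))
  have hVbV := (continuous_matrix_inv ((hV.matrix_conjTranspose.matrix_mul hb).matrix_mul hV)
    fun y ↦ (posDef_conjTranspose_mul_mul (hpos y) (hinj y)).isUnit).comp
    (continuous_snd (X := I))
  replace hb := hb.comp (continuous_snd (X := I))
  replace hV := hV.comp (continuous_snd (X := I))
  have ht : Continuous fun q : I × Y ↦ (q.1 : ℝ) := by fun_prop
  have hY := ((continuous_const (y := (1 : ℝ)).sub ht).smul (hb.matrix_mul hV)).add (ht.smul hV)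
  have hK := ((continuous_const (y := (1 : ℝ)).sub ht).smul hVbV).add (ht.smul hVV)
  exact ((hY.matrix_mul hK).matrix_mul hY.matrix_conjTranspose).add
    (hb.sub (((hb.matrix_mul hV).matrix_mul hVbV).matrix_mul
      (hV.matrix_conjTranspose.matrix_mul hb)))

end Continuity

end SplittingHomotopy

section CStarAlgebra

variable {A : Type*} [CStarAlgebra A]

theorem exists_unitary_conj_eq_of_isUnit {p q z : A} (hp : IsSelfAdjoint p) (hq : IsSelfAdjoint q)
    (hz : IsUnit z) (hpz : p * z = z * q) : ∃ u ∈ unitary A, u * p * star u = q := by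
  let _ : PartialOrder A := CStarAlgebra.spectralOrder A
  have : StarOrderedRing A := CStarAlgebra.spectralOrderedRing A
  have hzp : star z * p = q * star z := by
    simpa only [star_mul, hp.star_eq, hq.star_eq] using congrArg star hpz
  obtain ⟨r, hr⟩ : IsUnit (CFC.abs z) := by
    rw [← isUnit_pow_iff two_ne_zero, CFC.abs_sq]
    exact hz.star.mul hz
  have hrq : Commute (r : A) q := by
    rw [hr]
    refine Commute.cfcₙ_nnreal ?_ _
    rw [Commute, SemiconjBy, mul_assoc, ← hpz, ← mul_assoc, hzp, mul_assoc]
  have hr_star : star r = r := by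
    ext
    rw [Units.coe_star, hr, (CFC.abs_nonneg z).isSelfAdjoint.star_eq]
  obtain ⟨z, rfl⟩ := hz
  have hrr : star z * z = r * r := by
    ext
    simp only [Units.val_mul, Units.coe_star, hr, CFC.abs_mul_abs]
  have hu : r⁻¹ * star z * star (r⁻¹ * star z) = 1 := by
    rw [star_mul, star_star, star_inv, hr_star, mul_assoc, ← mul_assoc (star z), hrr]
    group
  refine ⟨(r⁻¹ * star z : Aˣ), Unitary.mem_iff.mpr
    ⟨congrArg Units.val (mul_eq_one_comm.mp hu), congrArg Units.val hu⟩, ?_⟩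
  calc (↑(r⁻¹ * star z) * p * star ↑(r⁻¹ * star z) : A)
      = ↑r⁻¹ * q * star ↑z * star ↑(r⁻¹ * star z) := by
        rw [Units.val_mul, Units.coe_star, mul_assoc _ _ p, hzp, mul_assoc _ q]
    _ = q * ↑(r⁻¹ * star z * star (r⁻¹ * star z)) := by
        rw [hrq.units_inv_left.eq, mul_assoc, mul_assoc, ← mul_assoc (↑r⁻¹ : A)]
        rfl
    _ = q := by rw [hu, Units.val_one, mul_one]

theorem exists_unitary_conj_eq_of_norm_sub_lt_one {p q : A} (hp : IsStarProjection p)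
    (hq : IsStarProjection q) (hpq : ‖p - q‖ < 1) : ∃ u ∈ unitary A, u * p * star u = q := by
  have hpp := hp.isIdempotentElem.eq
  have hqq := hq.isIdempotentElem.eq
  have hz : IsUnit (1 - (2 * p - 1) * (p - q)) := by
    apply isUnit_one_sub_of_norm_lt_one
    rwa [CStarRing.norm_mem_unitary_mul _ hp.two_mul_sub_one_mem_unitary]
  refine exists_unitary_conj_eq_of_isUnit hp.isSelfAdjoint hq.isSelfAdjoint hz ?_
  have hl : p * (1 - (2 * p - 1) * (p - q)) = p * q := by
    calc _ = p - 2 * (p * p) * p + p * p + 2 * (p * p) * q - p * q := by noncomm_ring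
      _ = p * q := by rw [hpp, mul_assoc, hpp]; noncomm_ring
  have hr : (1 - (2 * p - 1) * (p - q)) * q = p * q := by
    calc _ = q - 2 * (p * p) * q + p * q + 2 * p * (q * q) - q * q := by noncomm_ring
      _ = p * q := by rw [hpp, hqq]; noncomm_ring
  rw [hl, hr]

theorem exists_unitary_conj_eq_of_continuous {T : Type*} [TopologicalSpace T] [PreconnectedSpace T]
    {p : T → A} (hp : Continuous p) (hproj : ∀ t, IsStarProjection (p t)) (s t : T) :
    ∃ u ∈ unitary A, u * p s * star u = p t := by
  have : Std.Symm fun s t ↦ ∃ u ∈ unitary A, u * p s * star u = p t := ⟨by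
    rintro s t ⟨u, hu, h⟩
    refine ⟨star u, Unitary.star_mem hu, ?_⟩
    calc star u * p t * star (star u) = star u * u * p s * (star u * u) := by
          rw [← h, star_star]
          noncomm_ring
      _ = p s := by rw [(Unitary.mem_iff.mp hu).1, one_mul, mul_one]⟩
  refine PreconnectedSpace.induction₂ (fun s t ↦ ∃ u ∈ unitary A, u * p s * star u = p t)
    (fun s ↦ ?_) ⟨?_⟩ s t
  · filter_upwards [Metric.continuous_iff'.mp hp s 1 one_pos] with t ht
    exact exists_unitary_conj_eq_of_norm_sub_lt_one (hproj s) (hproj t)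
      (by rwa [← dist_eq_norm, dist_comm])
  · rintro r s t ⟨u, hu, hrs⟩ ⟨v, hv, hst⟩
    exact ⟨v * u, mul_mem hv hu, by simp [← hst, ← hrs, mul_assoc]⟩

end CStarAlgebra

section TrivialProjection

open Matrix

variable {m n : Type*} [Fintype m] [Fintype n] [DecidableEq n]

theorem injective_mulVec_segment_one_mul {𝕜 : Type*} [RCLike 𝕜] {c : Matrix n n 𝕜}
    {N : Matrix n m 𝕜} (hc : c.PosSemidef) (hcN : Function.Injective (c * N).mulVec) (t : I) :
    Function.Injective (((1 - t : ℝ) • c + (t : ℝ) • (1 : Matrix n n 𝕜)) * N).mulVec := by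
  rcases t.2.1.eq_or_lt with ht | ht
  · simpa [← ht] using hcN
  · have hpos := PosDef.posSemidef_add (hc.smul (sub_nonneg.mpr t.2.2)) (PosDef.one.smul ht)
    have := (mulVec_injective_of_isUnit hpos.isUnit).comp (injective_mulVec_of_mul hcN)
    simpa only [Function.comp_def, mulVec_mulVec] using this

open scoped Matrix.Norms.L2Operator in
theorem exists_unitary_conj_colProj_eq_const {X : Type*} [TopologicalSpace X] [CompactSpace X]
    [DecidableEq m] (c : C(X, Matrix n n ℂ)) (N : Matrix n m ℂ) (hc : ∀ x, (c x).PosSemidef)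
    (hcN : ∀ x, Function.Injective (c x * N).mulVec) :
    ∃ u : C(X, Matrix n n ℂ), (∀ x, u x ∈ unitaryGroup n ℂ) ∧
      ∃ p₀, ∀ x, u x * colProj (c x * N) * star (u x) = p₀ := by
  let V (q : I × X) : Matrix n m ℂ :=
    ((1 - q.1 : ℝ) • c q.2 + (q.1 : ℝ) • (1 : Matrix n n ℂ)) * N
  have hinj (q : I × X) : Function.Injective (V q).mulVec :=
    injective_mulVec_segment_one_mul (hc q.2) (hcN q.2) q.1
  let P : C(I × X, Matrix n n ℂ) := ⟨fun q ↦ colProj (V q), continuous_colProj (by fun_prop) hinj⟩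
  have hP (t : I) : IsStarProjection (P.curry t) :=
    have hproj (x : X) := isStarProjection_colProj (hinj (t, x))
    ⟨ContinuousMap.ext fun x ↦ (hproj x).isIdempotentElem,
      ContinuousMap.ext fun x ↦ (hproj x).isSelfAdjoint⟩
  obtain ⟨u, hu, hconj⟩ := exists_unitary_conj_eq_of_continuous P.curry.continuous hP 0 1
  refine ⟨u, fun x ↦ ⟨DFunLike.congr_fun hu.1 x, DFunLike.congr_fun hu.2 x⟩, colProj N,
    fun x ↦ ?_⟩
  simpa [P, V] using DFunLike.congr_fun hconj x

end TrivialProjection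

theorem stmt2_general {X n : Type*} [TopologicalSpace X] [T2Space X] [CompactSpace X] [Fintype n]
    [DecidableEq n] {d k : ℕ} (hdim : HasCovDimLE X d) (a : C(X, Matrix n n ℂ))
    (ha : ∀ x, (a x).PosSemidef) (hrank : ∀ x, k ≤ (a x).rank) :
    ∃ h : C(I, C(X, Matrix n n ℂ)),
      (∀ (t : I) (x : X), ((h t) x).PosSemidef) ∧
      h 0 = a ∧
      (∀ (t : I) (x : X), ((h t) x).rank = (a x).rank) ∧
      ∃ p : C(X, Matrix n n ℂ),
        (∀ x, (p x).IsHermitian ∧ p x * p x = p x) ∧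
        (∃ m : ℕ, (∀ x, (p x).rank = m) ∧ k ≤ m + d / 2) ∧
        (∃ u : C(X, Matrix n n ℂ),
          (∀ x, u x ∈ Matrix.unitaryGroup n ℂ) ∧
          ∃ p₀ : Matrix n n ℂ, ∀ x, u x * p x * star (u x) = p₀) ∧
        (∀ x, p x * (h 1) x = p x ∧ (h 1) x * p x = p x) := by
  obtain ⟨c, N, hc, hinj⟩ := hdim.exists_posSemidef_injective_mul a ha hrank
  have hcN (x : X) := injective_mulVec_of_mul (hinj x)
  have hproj (x : X) := isStarProjection_colProj (hcN x)
  have hV : Continuous fun x ↦ c x * N := c.continuous.matrix_mul continuous_const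
  let H : C(I × X, Matrix n n ℂ) := ⟨_, continuous_splitPath a.continuous hV ha hinj⟩
  refine ⟨H.curry, fun t x ↦ posSemidef_splitPath (ha x) (hinj x) t,
    ContinuousMap.ext fun x ↦ splitPath_zero (ha x),
    fun t x ↦ rank_splitPath (ha x) (hinj x) t,
    ⟨_, continuous_colProj hV hcN⟩, fun x ↦ ⟨(hproj x).isSelfAdjoint, (hproj x).isIdempotentElem⟩,
    ⟨_, fun x ↦ rank_colProj (hcN x), ?_⟩, exists_unitary_conj_colProj_eq_const c N hc hcN,
    fun x ↦ ⟨colProj_mul_splitPath_one (ha x) (hinj x),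
      splitPath_one_mul_colProj (ha x) (hinj x)⟩⟩
  rw [Fintype.card_fin]
  omega

/-- If `a ∈ M_n(C(X))` is positive with `rank(a(x)) ≥ k` everywhere on a compact
metric space `X` of covering dimension `d`, then there is a homotopy `h` of positive elements
with `h 0 = a`, constant pointwise ranks, and such that `h 1` has a trivial projection direct
summand `p` of constant rank at least `k - d`. -/
theorem stmt2 {X : Type*} [MetricSpace X] [CompactSpace X] (d : ℕ) (hdim : IsCovDim X d)
    (n k : ℕ) (hn : 0 < n) (hk : 0 < k)
    (a : C(X, Matrix (Fin n) (Fin n) ℂ)) (ha : ∀ x, (a x).PosSemidef)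
    (hrank : ∀ x, k ≤ (a x).rank) :
    ∃ h : C(I, C(X, Matrix (Fin n) (Fin n) ℂ)),
      (∀ (t : I) (x : X), ((h t) x).PosSemidef) ∧
      h 0 = a ∧
      (∀ (t : I) (x : X), ((h t) x).rank = (a x).rank) ∧
      ∃ p : C(X, Matrix (Fin n) (Fin n) ℂ),
        (∀ x, (p x).IsHermitian ∧ p x * p x = p x) ∧
        (∃ m : ℕ, (∀ x, (p x).rank = m) ∧ k ≤ m + d) ∧
        (∃ u : C(X, Matrix (Fin n) (Fin n) ℂ),
          (∀ x, u x ∈ Matrix.unitaryGroup (Fin n) ℂ) ∧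
          ∃ p₀ : Matrix (Fin n) (Fin n) ℂ, ∀ x, u x * p x * star (u x) = p₀) ∧
        (∀ x, p x * (h 1) x = p x ∧ (h 1) x * p x = p x) := by
  obtain ⟨h, hpos, h0, hr, p, hp, ⟨m, hm, hkm⟩, hu, hsum⟩ := stmt2_general hdim.1 a ha hrank
  exact ⟨h, hpos, h0, hr, p, hp, ⟨m, hm, by omega⟩, hu, hsum⟩
end
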